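/- arXiv:2406.01766 — 2 statements merged into one kernel-verified Lean document; each statement's English description precedes it below -/
import Mathlib

section
/- Let α, β ∈ ℝ² (or ℝ^d) be unit vectors with angle φ = ∠(α,β) ∈ [0, π/2] and αᵀβ ≥ 0. Then for x ∼ N(0, I), E[|αᵀx| · 1{sign(αᵀx) ≠ sign(βᵀx)}] = O(φ²), i.e., there is a universal constant C with E[|αᵀx| · 1{sign(αᵀx) ≠ sign(βᵀx)}] ≤ C φ². -/
open MeasureTheory ProbabilityTheory Real
open scoped BigOperators Classical

/-- standard Gaussian measure `N(0, I_d)` on `ℝ^d` -/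
noncomputable def stdG (d : ℕ) : Measure (Fin d → ℝ) :=
  Measure.pi fun _ => gaussianReal 0 1

/-!
If `v ≠ 0`, then `|u| * 1{sign u ≠ sign v} = (|u| - u * sign v) / 2`, so only `E[X * sign Y]` has to
be computed for a centred Gaussian pair `(X, Y)`. Subtracting from `X` its regression on `Y` leaves
a variable independent of `Y`, whence `E[X * sign Y] = cov(X, Y) / Var Y * E|Y|`. For linear
functionals of a standard Gaussian vector with unit coefficient vectors at angle `φ`, this yields
the exact value `(1 - cos φ) / √(2π)`, which is at most `φ ^ 2 / (2 √(2π))`.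
-/

section Sign

lemma measurable_real_sign : Measurable Real.sign :=
  Measurable.ite measurableSet_Iio measurable_const
    (Measurable.ite measurableSet_Ioi measurable_const measurable_const)

lemma abs_real_sign_le_one (r : ℝ) : |Real.sign r| ≤ 1 := by
  rcases Real.sign_apply_eq r with h | h | h <;> simp [h]

lemma mul_real_sign_self (r : ℝ) : r * Real.sign r = |r| := by
  rcases lt_trichotomy r 0 with h | rfl | h
  · rw [Real.sign_of_neg h, abs_of_neg h, mul_neg_one]
  · simp
  · rw [Real.sign_of_pos h, abs_of_pos h, mul_one]

lemma ite_sign_ne_abs {u v : ℝ} (hv : v ≠ 0) :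
    (if Real.sign u ≠ Real.sign v then |u| else 0) = (|u| - u * Real.sign v) / 2 := by
  split_ifs with h
  · rcases eq_or_ne u 0 with rfl | hu
    · simp
    have hsign : Real.sign v = -Real.sign u := by
      rcases Real.sign_apply_eq_of_ne_zero u hu with h₁ | h₁ <;>
        rcases Real.sign_apply_eq_of_ne_zero v hv with h₂ | h₂ <;> simp_all
    rw [hsign, mul_neg, mul_real_sign_self]
    ring
  · rw [← not_ne_iff.1 h, mul_real_sign_self, sub_self, zero_div]

end Sign

section GaussianPair

open scoped NNReal

lemma integral_Ioi_mul_exp_neg_mul_sq {b : ℝ} (hb : 0 < b) :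
    ∫ x in Set.Ioi (0 : ℝ), x * exp (-b * x ^ 2) = (2 * b)⁻¹ := by
  calc ∫ x in Set.Ioi (0 : ℝ), x * exp (-b * x ^ 2)
      = b ^ (-(1 + 1) / 2 : ℝ) * (1 / 2) * Gamma ((1 + 1) / 2) := by
        simpa using integral_rpow_mul_exp_neg_mul_rpow (p := 2) (q := 1) two_pos (by norm_num) hb
    _ = (2 * b)⁻¹ := by
        rw [neg_div, add_self_div_two, Gamma_one, rpow_neg_one]
        ring

lemma integral_abs_gaussianReal_zero (v : ℝ≥0) :
    ∫ x, |x| ∂gaussianReal 0 v = √(2 / π) * √v := by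
  rcases eq_or_ne v 0 with rfl | hv
  · simp
  calc ∫ x, |x| ∂gaussianReal 0 v
      = ∫ x, (√(2 * π * v))⁻¹ * (|x| * exp (-(2 * v : ℝ)⁻¹ * |x| ^ 2)) := by
        rw [integral_gaussianReal_eq_integral_smul hv]
        refine integral_congr_ae (ae_of_all _ fun x ↦ ?_)
        simp only [gaussianPDFReal, smul_eq_mul, sub_zero, sq_abs]
        ring_nf
    _ = (√(2 * π * v))⁻¹ * (2 * v) := by
        rw [integral_const_mul, integral_comp_abs (f := fun x ↦ x * exp (-(2 * v : ℝ)⁻¹ * x ^ 2)),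
          integral_Ioi_mul_exp_neg_mul_sq (by positivity)]
        field_simp
    _ = √(2 / π) * √v := by
        rw [← sqrt_mul (by positivity), inv_mul_eq_div, div_eq_iff (by positivity),
          ← sqrt_mul (by positivity), eq_comm,
          sqrt_eq_iff_mul_self_eq (by positivity) (by positivity)]
        field_simp

variable {Ω : Type*} [MeasurableSpace Ω] {P : Measure Ω} {X Y : Ω → ℝ}

lemma integral_abs_of_hasGaussianLaw (hX : HasGaussianLaw X P) (hX₀ : P[X] = 0) :
    ∫ ω, |X ω| ∂P = √(2 / π) * √Var[X; P] := by
  have h := integral_abs_gaussianReal_zero Var[X; P].toNNReal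
  rwa [← hX₀, ← hX.map_eq_gaussianReal, integral_map hX.aemeasurable (by fun_prop),
    coe_toNNReal _ (variance_nonneg X P)] at h

lemma ae_ne_of_hasGaussianLaw (hX : HasGaussianLaw X P) (hvar : Var[X; P] ≠ 0) (c : ℝ) :
    ∀ᵐ ω ∂P, X ω ≠ c := by
  have hv : Var[X; P].toNNReal ≠ 0 :=
    (toNNReal_pos.2 ((variance_nonneg X P).lt_of_ne' hvar)).ne'
  have := nullSingletonClass_gaussianReal (μ := P[X]) hv
  refine ae_of_ae_map (p := (· ≠ c)) hX.aemeasurable ?_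
  rw [hX.map_eq_gaussianReal]
  exact Measure.ae_ne _ c

lemma variance_mul_covariance_comp_of_hasGaussianLaw
    (hXY : HasGaussianLaw (fun ω ↦ (X ω, Y ω)) P) {f : ℝ → ℝ} (hf : Measurable f)
    (hfY : MemLp (f ∘ Y) 2 P) :
    Var[Y; P] * cov[X, f ∘ Y; P] = cov[X, Y; P] * cov[Y, f ∘ Y; P] := by
  have := hXY.isProbabilityMeasure
  have hX := hXY.fst.memLp_two.const_smul Var[Y; P]
  have hY := hXY.snd.memLp_two.const_smul cov[X, Y; P]
  let W : Ω → ℝ := Var[Y; P] • X - cov[X, Y; P] • Y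
  have hWY : HasGaussianLaw (fun ω ↦ (W ω, Y ω)) P :=
    hXY.map_fun ((Var[Y; P] • ContinuousLinearMap.fst ℝ ℝ ℝ -
      cov[X, Y; P] • ContinuousLinearMap.snd ℝ ℝ ℝ).prod (ContinuousLinearMap.snd ℝ ℝ ℝ))
  have hcov : cov[W, Y; P] = 0 := by
    rw [covariance_sub_left hX hY hXY.snd.memLp_two, covariance_smul_left, covariance_smul_left,
      covariance_self hXY.snd.aemeasurable]
    ring
  have hind : IndepFun W (f ∘ Y) P :=
    (hWY.indepFun_of_covariance_eq_zero hcov).comp measurable_id hf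
  have hzero := hind.covariance_eq_zero hWY.fst.memLp_two hfY
  rwa [covariance_sub_left hX hY hfY, covariance_smul_left, covariance_smul_left, sub_eq_zero]
    at hzero

lemma memLp_sign_comp [IsFiniteMeasure P] (hX : AEMeasurable X P) (p : ENNReal) :
    MemLp (Real.sign ∘ X) p P :=
  .of_bound (measurable_real_sign.comp_aemeasurable hX).aestronglyMeasurable 1
    (ae_of_all _ fun ω ↦ abs_real_sign_le_one (X ω))

lemma covariance_sign_of_integral_eq_zero [IsProbabilityMeasure P] (hX : MemLp X 2 P)
    (hY : AEMeasurable Y P) (hX₀ : P[X] = 0) :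
    cov[X, Real.sign ∘ Y; P] = ∫ ω, X ω * Real.sign (Y ω) ∂P := by
  rw [covariance_eq_sub hX (memLp_sign_comp hY 2), hX₀, zero_mul, sub_zero]
  rfl

lemma integral_mul_sign_of_hasGaussianLaw (hXY : HasGaussianLaw (fun ω ↦ (X ω, Y ω)) P)
    (hX₀ : P[X] = 0) (hY₀ : P[Y] = 0) (hY : Var[Y; P] ≠ 0) :
    ∫ ω, X ω * Real.sign (Y ω) ∂P = √(2 / π) * (cov[X, Y; P] / √Var[Y; P]) := by
  have := hXY.isProbabilityMeasure
  have hreg := variance_mul_covariance_comp_of_hasGaussianLaw hXY measurable_real_sign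
    (memLp_sign_comp hXY.snd.aemeasurable 2)
  rw [covariance_sign_of_integral_eq_zero hXY.fst.memLp_two hXY.snd.aemeasurable hX₀,
    covariance_sign_of_integral_eq_zero hXY.snd.memLp_two hXY.snd.aemeasurable hY₀] at hreg
  simp only [mul_real_sign_self, integral_abs_of_hasGaussianLaw hXY.snd hY₀] at hreg
  have hsqrt : √Var[Y; P] ≠ 0 := (sqrt_ne_zero (variance_nonneg Y P)).2 hY
  refine mul_left_cancel₀ hY ?_
  calc Var[Y; P] * ∫ ω, X ω * Real.sign (Y ω) ∂P
      = √Var[Y; P] * √Var[Y; P] * (√(2 / π) * (cov[X, Y; P] / √Var[Y; P])) := by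
        rw [hreg]
        field_simp
    _ = Var[Y; P] * (√(2 / π) * (cov[X, Y; P] / √Var[Y; P])) := by
        rw [mul_self_sqrt (variance_nonneg Y P)]

lemma integral_abs_sign_ne_of_hasGaussianLaw (hXY : HasGaussianLaw (fun ω ↦ (X ω, Y ω)) P)
    (hX₀ : P[X] = 0) (hY₀ : P[Y] = 0) (hY : Var[Y; P] ≠ 0) :
    ∫ ω, (if Real.sign (X ω) ≠ Real.sign (Y ω) then |X ω| else 0) ∂P =
      (√Var[X; P] - cov[X, Y; P] / √Var[Y; P]) / √(2 * π) := by
  have := hXY.isProbabilityMeasure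
  have hint : Integrable (fun ω ↦ X ω * Real.sign (Y ω)) P :=
    hXY.fst.memLp_two.integrable_mul (memLp_sign_comp hXY.snd.aemeasurable 2)
  have hconst : √(2 / π) / 2 = (√(2 * π))⁻¹ := by
    rw [sqrt_div two_pos.le, sqrt_mul two_pos.le]
    field_simp
    exact sq_sqrt two_pos.le
  calc ∫ ω, (if Real.sign (X ω) ≠ Real.sign (Y ω) then |X ω| else 0) ∂P
      = ∫ ω, (|X ω| - X ω * Real.sign (Y ω)) / 2 ∂P := by
        refine integral_congr_ae ?_
        filter_upwards [ae_ne_of_hasGaussianLaw hXY.snd hY 0] with ω hω using ite_sign_ne_abs hω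
    _ = √(2 / π) / 2 * (√Var[X; P] - cov[X, Y; P] / √Var[Y; P]) := by
        rw [integral_div, integral_sub hXY.fst.integrable.abs hint,
          integral_abs_of_hasGaussianLaw hXY.fst hX₀,
          integral_mul_sign_of_hasGaussianLaw hXY hX₀ hY₀ hY]
        ring
    _ = (√Var[X; P] - cov[X, Y; P] / √Var[Y; P]) / √(2 * π) := by
        rw [hconst, inv_mul_eq_div]

end GaussianPair

section StdGaussian

open InnerProductGeometry
open scoped RealInnerProductSpace

variable {E : Type*} [NormedAddCommGroup E] [InnerProductSpace ℝ E] [FiniteDimensional ℝ E]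
  [MeasurableSpace E] [BorelSpace E]

lemma hasGaussianLaw_inner_prodMk_stdGaussian (a b : E) :
    HasGaussianLaw (fun x ↦ (⟪a, x⟫, ⟪b, x⟫)) (stdGaussian E) :=
  IsGaussian.hasGaussianLaw_id.map ((innerSL ℝ a).prod (innerSL ℝ b))

lemma integral_inner_stdGaussian (a : E) : ∫ x, ⟪a, x⟫ ∂stdGaussian E = 0 :=
  integral_strongDual_stdGaussian (innerSL ℝ a)

lemma covariance_inner_stdGaussian (a b : E) :
    cov[fun x ↦ ⟪a, x⟫, fun x ↦ ⟪b, x⟫; stdGaussian E] = ⟪a, b⟫ := by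
  rw [← covarianceBilin_apply_eq_cov IsGaussian.memLp_two_id, covarianceBilin_stdGaussian]
  rfl

lemma variance_inner_stdGaussian (a : E) : Var[fun x ↦ ⟪a, x⟫; stdGaussian E] = ‖a‖ ^ 2 := by
  rw [← covariance_self (by fun_prop), covariance_inner_stdGaussian, real_inner_self_eq_norm_sq]

lemma integral_abs_inner_sign_ne_stdGaussian (a : E) {b : E} (hb : b ≠ 0) :
    ∫ x, (if Real.sign ⟪a, x⟫ ≠ Real.sign ⟪b, x⟫ then |⟪a, x⟫| else 0) ∂stdGaussian E =
      ‖a‖ * (1 - cos (angle a b)) / √(2 * π) := by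
  have hb' : ‖b‖ ≠ 0 := norm_ne_zero_iff.2 hb
  rw [integral_abs_sign_ne_of_hasGaussianLaw (hasGaussianLaw_inner_prodMk_stdGaussian a b)
      (integral_inner_stdGaussian a) (integral_inner_stdGaussian b)
      (by rw [variance_inner_stdGaussian]; positivity),
    variance_inner_stdGaussian, variance_inner_stdGaussian, covariance_inner_stdGaussian,
    sqrt_sq (norm_nonneg a), sqrt_sq (norm_nonneg b), ← cos_angle_mul_norm_mul_norm]
  field_simp

lemma integral_abs_inner_sign_ne_stdGaussian_le (a : E) {b : E} (hb : b ≠ 0) :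
    ∫ x, (if Real.sign ⟪a, x⟫ ≠ Real.sign ⟪b, x⟫ then |⟪a, x⟫| else 0) ∂stdGaussian E ≤
      ‖a‖ * (angle a b ^ 2 / 2) / √(2 * π) := by
  rw [integral_abs_inner_sign_ne_stdGaussian a hb]
  gcongr
  linarith [one_sub_sq_div_two_le_cos (x := angle a b)]

end StdGaussian

lemma integral_comp_toLp_stdG {d : ℕ} (f : EuclideanSpace ℝ (Fin d) → ℝ) :
    ∫ x, f (WithLp.toLp 2 x) ∂stdG d = ∫ x, f x ∂stdGaussian (EuclideanSpace ℝ (Fin d)) := by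
  rw [← map_pi_eq_stdGaussian]
  exact (integral_map_equiv (MeasurableEquiv.toLp 2 (Fin d → ℝ)) f).symm

theorem stmt9_general {d : ℕ} {α β : Fin d → ℝ} (hα : ∑ j, α j ^ 2 = 1) (hβ : ∑ j, β j ^ 2 = 1) :
    ∫ x, (if Real.sign (∑ j, α j * x j) ≠ Real.sign (∑ j, β j * x j)
            then |∑ j, α j * x j| else 0) ∂stdG d
      ≤ (2 * √(2 * π))⁻¹ * arccos (∑ j, α j * β j) ^ 2 := by
  let a := WithLp.toLp 2 α
  let b := WithLp.toLp 2 β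
  have hinner (c x : Fin d → ℝ) :
      inner ℝ (WithLp.toLp 2 c) (WithLp.toLp 2 x) = ∑ j, c j * x j := by
    simp [PiLp.inner_apply, mul_comm]
  have ha : ‖a‖ = 1 := by simp [a, EuclideanSpace.norm_eq, hα]
  have hb : ‖b‖ = 1 := by simp [b, EuclideanSpace.norm_eq, hβ]
  have hangle : InnerProductGeometry.angle a b = arccos (∑ j, α j * β j) := by
    rw [InnerProductGeometry.angle, ha, hb, hinner, mul_one, div_one]
  have hle := integral_abs_inner_sign_ne_stdGaussian_le a (norm_ne_zero_iff.1 (hb ▸ one_ne_zero))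
  rw [← integral_comp_toLp_stdG, ha, hangle] at hle
  simp only [a, b, hinner] at hle
  exact hle.trans_eq (by ring)

theorem stmt9 : ∃ C : ℝ, 0 < C ∧ ∀ (d : ℕ) (α β : Fin d → ℝ),
    (∑ j, α j ^ 2) = 1 → (∑ j, β j ^ 2) = 1 → 0 ≤ ∑ j, α j * β j →
    (∫ x, (if Real.sign (∑ j, α j * x j) ≠ Real.sign (∑ j, β j * x j)
            then |∑ j, α j * x j| else 0) ∂(stdG d))
      ≤ C * (Real.arccos (∑ j, α j * β j)) ^ 2 :=
  ⟨(2 * √(2 * π))⁻¹, by positivity, fun _ _ _ hα hβ _ ↦ stmt9_general hα hβ⟩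
end

section
/- Let α, β ∈ ℝ⁴ be unit vectors with angle φ = ∠(α,β) ∈ (0, π), and let x ∼ N(0, I₄). Then for any 0 < δ₁, δ₂ ≤ φ, E[‖x‖² · 1{|αᵀx| ≤ δ₁‖x‖, |βᵀx| ≤ δ₂‖x‖}] = O(δ₁δ₂ / sin φ). -/
open MeasureTheory ProbabilityTheory Real
open scoped BigOperators Classical

/-!
The set `A` of `x` with `|⟪v i, x⟫| ≤ δ i * ‖x‖` for all `i` is a cone. Since Lebesgue measure is
homogeneous, the law of `‖x‖` on `A` is the law of `‖x‖` on the whole space times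
`vol (A ∩ B) / vol B`, with `B` the unit ball, and the same proportion governs the integral of a
radial function against any measure with radial density, such as the Gaussian. On `A ∩ B` the
linear forms `⟪v i, ·⟫` are bounded by `δ i`, and the coordinates along an orthonormal basis of the
orthogonal complement of the `v i` are bounded by `1`. So `A ∩ B` lies in a parallelepiped of volume
`2 ^ n * ∏ i, δ i / √(det (gram v))`. For two unit vectors the denominator is the sine of their
angle.
-/

open Module Metric Set
open scoped ENNReal Pointwise RealInnerProductSpace

section Cone

variable {E : Type*} [NormedAddCommGroup E] [NormedSpace ℝ E]

/-- Cones with apex at the origin, i.e. sets invariant under positive scaling: the sets on which the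
integral of a radial function is a fixed fraction of its integral over the whole space. Convexity is
not required, and the apex may or may not belong to the cone. -/
def IsCone (A : Set E) : Prop := ∀ ⦃r : ℝ⦄, 0 < r → r • A = A

lemma IsCone.inter_ball_eq_smul {A : Set E} (hA : IsCone A) {r : ℝ} (hr : 0 < r) :
    A ∩ ball 0 r = r • (A ∩ ball 0 1) := by
  rw [smul_set_inter₀ hr.ne', hA hr, smul_unitBall_of_pos hr]

variable [FiniteDimensional ℝ E] [MeasurableSpace E] [BorelSpace E]
  (μ : Measure E) [μ.IsAddHaarMeasure]

lemma IsCone.addHaar_inter_ball {A : Set E} (hA : IsCone A) (r : ℝ) :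
    μ (A ∩ ball 0 r) = μ (A ∩ ball 0 1) / μ (ball 0 1) * μ (ball 0 r) := by
  obtain hr | hr := le_or_gt r 0
  · simp [ball_eq_empty.2 hr]
  have hball : μ (ball 0 1) ≠ 0 := (measure_ball_pos μ 0 one_pos).ne'
  rw [hA.inter_ball_eq_smul hr, Measure.addHaar_smul_of_nonneg μ hr.le,
    Measure.addHaar_ball_of_pos μ 0 hr, mul_left_comm,
    ENNReal.div_mul_cancel hball measure_ball_lt_top.ne]

lemma IsCone.map_norm_restrict {A : Set E} (hA : IsCone A) :
    (μ.restrict A).map norm = (μ (A ∩ ball 0 1) / μ (ball 0 1)) • μ.map norm := by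
  have hpre (r : ℝ) : (norm : E → ℝ) ⁻¹' Iio r = ball 0 r := by ext; simp
  have hIio (r : ℝ) : (μ.restrict A).map norm (Iio r) = μ (A ∩ ball 0 r) := by
    rw [Measure.map_apply measurable_norm measurableSet_Iio, hpre,
      Measure.restrict_apply measurableSet_ball, inter_comm]
  refine Measure.ext_of_generateFrom_of_iUnion (range Iio) (fun n : ℕ ↦ Iio (n : ℝ))
    ((BorelSpace.measurable_eq (α := ℝ)).trans (borel_eq_generateFrom_Iio ℝ))
    isPiSystem_Iio (iUnion_eq_univ_iff.2 exists_nat_gt) (fun n ↦ mem_range_self _) (fun n ↦ ?_) ?_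
  · rw [hIio]
    exact measure_ne_top_of_subset inter_subset_right measure_ball_lt_top.ne
  · rintro _ ⟨r, rfl⟩
    rw [hIio, Measure.smul_apply, Measure.map_apply measurable_norm measurableSet_Iio, hpre,
      smul_eq_mul, hA.addHaar_inter_ball μ]

theorem IsCone.setIntegral_fun_norm {F : Type*} [NormedAddCommGroup F] [NormedSpace ℝ F]
    {A : Set E} (hA : IsCone A) {f : ℝ → F} (hf : StronglyMeasurable f) :
    ∫ x in A, f ‖x‖ ∂μ = (μ.real (A ∩ ball 0 1) / μ.real (ball 0 1)) • ∫ x, f ‖x‖ ∂μ := by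
  rw [← integral_map measurable_norm.aemeasurable hf.aestronglyMeasurable,
    hA.map_norm_restrict μ, integral_smul_measure,
    integral_map measurable_norm.aemeasurable hf.aestronglyMeasurable, ENNReal.toReal_div,
    measureReal_def, measureReal_def]

end Cone

section Gaussian

lemma map_withDensity_comp {α β : Type*} [MeasurableSpace α] [MeasurableSpace β]
    {μ : Measure α} {ν : Measure β} {f : α → β} (hf : MeasurePreserving f μ ν)
    {g : β → ℝ≥0∞} (hg : Measurable g) :
    (μ.withDensity fun x ↦ g (f x)).map f = ν.withDensity g := by
  ext s hs
  rw [Measure.map_apply hf.measurable hs, withDensity_apply _ (hf.measurable hs),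
    withDensity_apply _ hs, hf.setLIntegral_comp_preimage hs hg]

variable {ι : Type*} [Fintype ι]

lemma prod_gaussianPDFReal_eq (x : ι → ℝ) :
    ∏ i, gaussianPDFReal 0 1 (x i) =
      (√(2 * π))⁻¹ ^ Fintype.card ι * exp (-(∑ i, x i ^ 2) / 2) := by
  simp [gaussianPDFReal, Finset.prod_mul_distrib, ← Real.exp_sum, Finset.sum_div, neg_div]

lemma pi_gaussianReal_eq_withDensity :
    Measure.pi (fun _ : ι ↦ gaussianReal 0 1) = volume.withDensity fun x ↦
      ENNReal.ofReal (∏ i, gaussianPDFReal 0 1 (x i)) := by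
  refine Measure.pi_eq fun s hs ↦ ?_
  rw [withDensity_apply _ (.univ_pi hs), volume_pi, Measure.restrict_pi_pi,
    ← ofReal_integral_eq_lintegral_ofReal
      (Integrable.fintype_prod fun i ↦ (integrable_gaussianPDFReal 0 1).restrict)
      (ae_of_all _ fun x ↦ Finset.prod_nonneg fun i _ ↦ gaussianPDFReal_nonneg _ _ _),
    integral_fintype_prod_eq_prod (fun _ ↦ gaussianPDFReal 0 1),
    ENNReal.ofReal_prod_of_nonneg fun i _ ↦ integral_nonneg fun x ↦ gaussianPDFReal_nonneg _ _ _]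
  simp only [gaussianReal_apply_eq_integral 0 one_ne_zero]

variable {E : Type*} [NormedAddCommGroup E] [InnerProductSpace ℝ E]

lemma norm_sum_smul_orthonormalBasis_sq (b : OrthonormalBasis ι ℝ E) (x : ι → ℝ) :
    ‖∑ i, x i • b i‖ ^ 2 = ∑ i, x i ^ 2 := by
  rw [← real_inner_self_eq_norm_sq, b.orthonormal.inner_sum]
  simp [sq]

variable [FiniteDimensional ℝ E] [MeasurableSpace E] [BorelSpace E]

lemma measurePreserving_sum_smul_orthonormalBasis (b : OrthonormalBasis ι ℝ E) :
    MeasurePreserving fun x : ι → ℝ ↦ ∑ i, x i • b i := by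
  have hrepr : (fun x : ι → ℝ ↦ ∑ i, x i • b i) = b.repr.symm ∘ WithLp.toLp 2 :=
    funext fun x ↦ b.sum_repr_symm (WithLp.toLp 2 x)
  rw [hrepr]
  exact b.measurePreserving_repr_symm.comp (PiLp.volume_preserving_toLp ι)

theorem stdGaussian_eq_withDensity :
    stdGaussian E = volume.withDensity fun x ↦
      ENNReal.ofReal ((√(2 * π))⁻¹ ^ finrank ℝ E * exp (-‖x‖ ^ 2 / 2)) := by
  let b := stdOrthonormalBasis ℝ E
  rw [stdGaussian_eq_map_pi_orthonormalBasis b, pi_gaussianReal_eq_withDensity,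
    ← map_withDensity_comp (measurePreserving_sum_smul_orthonormalBasis b) (by fun_prop)]
  simp only [prod_gaussianPDFReal_eq, norm_sum_smul_orthonormalBasis_sq, Fintype.card_fin]

lemma integral_norm_sq_stdGaussian : ∫ x, ‖x‖ ^ 2 ∂stdGaussian E = finrank ℝ E := by
  let b := stdOrthonormalBasis ℝ E
  have hsq : Integrable (fun t : ℝ ↦ t ^ 2) (gaussianReal 0 1) :=
    (memLp_id_gaussianReal 2).integrable_sq
  have hvar : ∫ t, t ^ 2 ∂gaussianReal 0 1 = 1 := by
    have h := variance_fun_id_gaussianReal (μ := 0) (v := 1)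
    rwa [variance_of_integral_eq_zero (by fun_prop) integral_id_gaussianReal] at h
  rw [stdGaussian_eq_map_pi_orthonormalBasis b, integral_map
    (measurePreserving_sum_smul_orthonormalBasis b).measurable.aemeasurable (by fun_prop)]
  simp only [norm_sum_smul_orthonormalBasis_sq]
  rw [integral_finsetSum _ fun i _ ↦
    integrable_comp_eval (μ := fun _ ↦ gaussianReal 0 1) (i := i) hsq]
  simp [integral_comp_eval (μ := fun _ ↦ gaussianReal 0 1) hsq.aestronglyMeasurable, hvar]

theorem IsCone.setIntegral_fun_norm_stdGaussian {F : Type*} [NormedAddCommGroup F]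
    [NormedSpace ℝ F] {A : Set E} (hA : IsCone A) (hAm : MeasurableSet A) {f : ℝ → F}
    (hf : StronglyMeasurable f) :
    ∫ x in A, f ‖x‖ ∂stdGaussian E =
      (volume.real (A ∩ ball 0 1) / volume.real (ball (0 : E) 1)) •
        ∫ x, f ‖x‖ ∂stdGaussian E := by
  let ρ (r : ℝ) : ℝ := (√(2 * π))⁻¹ ^ finrank ℝ E * exp (-r ^ 2 / 2)
  have hρ {B : Set E} (hB : MeasurableSet B) :
      ∫ x in B, f ‖x‖ ∂stdGaussian E = ∫ x in B, ρ ‖x‖ • f ‖x‖ := by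
    rw [stdGaussian_eq_withDensity, setIntegral_withDensity_eq_setIntegral_toReal_smul₀
      (by fun_prop) (by simp) _ hB]
    congr! with _
    exact ENNReal.toReal_ofReal (by positivity)
  have huniv : ∫ x, f ‖x‖ ∂stdGaussian E = ∫ x : E, ρ ‖x‖ • f ‖x‖ := by
    simpa only [setIntegral_univ] using hρ .univ
  rw [hρ hAm, huniv]
  exact hA.setIntegral_fun_norm volume (f := fun r ↦ ρ r • f r)
    (StronglyMeasurable.smul (by fun_prop) hf)

end Gaussian

section Gram

variable {ι κ : Type*} [Fintype ι] [Fintype κ] [DecidableEq ι] [DecidableEq κ]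
  {E : Type*} [NormedAddCommGroup E] [InnerProductSpace ℝ E]

lemma det_gram_eq_det_inner_orthonormalBasis_sq (b : OrthonormalBasis ι ℝ E) (w : ι → E) :
    (Matrix.gram ℝ w).det = (Matrix.of fun i j ↦ ⟪w i, b j⟫).det ^ 2 := by
  have hmul : Matrix.gram ℝ w =
      .of (fun i j ↦ ⟪w i, b j⟫) * (Matrix.of fun i j ↦ ⟪w i, b j⟫).transpose := by
    ext i j
    simp [Matrix.mul_apply, real_inner_comm, ← b.sum_inner_mul_inner (w i) (w j)]
  rw [hmul, Matrix.det_mul, Matrix.det_transpose, sq]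

lemma det_gram_sumElim_orthonormal {v : κ → E} {u : ι → E} (hu : Orthonormal ℝ u)
    (hvu : ∀ i j, ⟪v i, u j⟫ = 0) :
    (Matrix.gram ℝ (Sum.elim v u)).det = (Matrix.gram ℝ v).det := by
  have hblock : Matrix.gram ℝ (Sum.elim v u) = Matrix.fromBlocks (Matrix.gram ℝ v) 0 0 1 := by
    rw [← Matrix.gram_eq_one_iff_orthonormal.2 hu]
    ext (i | i) (j | j) <;> simp [hvu, real_inner_comm]
  rw [hblock, Matrix.det_fromBlocks_zero₂₁, Matrix.det_one, mul_one]

lemma sqrt_det_gram_pair (x y : E) :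
    √(Matrix.gram ℝ ![x, y]).det =
      Real.sin (InnerProductGeometry.angle x y) * (‖x‖ * ‖y‖) := by
  rw [InnerProductGeometry.sin_angle_mul_norm_mul_norm, Matrix.det_fin_two]
  simp [real_inner_comm]

variable [FiniteDimensional ℝ E] [MeasurableSpace E] [BorelSpace E]

theorem map_inner_volume {w : ι → E} (hw : LinearIndependent ℝ w)
    (hcard : Fintype.card ι = finrank ℝ E) :
    (volume : Measure E).map (fun x i ↦ ⟪w i, x⟫) =
      ENNReal.ofReal (√(Matrix.gram ℝ w).det)⁻¹ • volume := by
  let b : OrthonormalBasis ι ℝ E :=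
    (stdOrthonormalBasis ℝ E).reindex (Fintype.equivOfCardEq (by simp [hcard]))
  let M : Matrix ι ι ℝ := .of fun i j ↦ ⟪w i, b j⟫
  have hdet : √(Matrix.gram ℝ w).det = |M.det| := by
    rw [det_gram_eq_det_inner_orthonormalBasis_sq b, sqrt_sq_eq_abs]
  have hM : M.det ≠ 0 := by
    rw [← abs_pos, ← hdet, sqrt_pos]
    exact (Matrix.posDef_gram_of_linearIndependent hw).det_pos
  have hcomp : (fun (x : E) i ↦ ⟪w i, x⟫) ∘ (fun x : ι → ℝ ↦ ∑ i, x i • b i) = Matrix.toLin' M := by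
    ext x i
    simp [M, Matrix.mulVec, dotProduct, inner_sum, inner_smul_right, mul_comm]
  rw [← (measurePreserving_sum_smul_orthonormalBasis b).map_eq,
    Measure.map_map (by fun_prop) (by fun_prop), hcomp,
    Real.map_matrix_volume_pi_eq_smul_volume_pi hM, abs_inv, hdet]

lemma volume_forall_abs_inner_le {w : ι → E} (hw : LinearIndependent ℝ w)
    (hcard : Fintype.card ι = finrank ℝ E) {c : ι → ℝ} (hc : ∀ i, 0 ≤ c i) :
    volume {x | ∀ i, |⟪w i, x⟫| ≤ c i} =
      ENNReal.ofReal (2 ^ finrank ℝ E * (∏ i, c i) / √(Matrix.gram ℝ w).det) := by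
  have hpre : {x | ∀ i, |⟪w i, x⟫| ≤ c i} = (fun x i ↦ ⟪w i, x⟫) ⁻¹' Icc (-c) c := by
    ext x
    simp [Pi.le_def, abs_le, forall_and]
  have hbox : volume (Icc (-c) c) = ENNReal.ofReal (2 ^ finrank ℝ E * ∏ i, c i) := by
    have hside (i : ι) : 0 ≤ 2 * c i := mul_nonneg zero_le_two (hc i)
    simp only [Real.volume_Icc_pi, Pi.neg_apply, sub_neg_eq_add, ← two_mul]
    rw [← ENNReal.ofReal_prod_of_nonneg fun i _ ↦ hside i, Finset.prod_mul_distrib,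
      Finset.prod_const, Finset.card_univ, hcard]
  rw [hpre, ← Measure.map_apply (by fun_prop) measurableSet_Icc, map_inner_volume hw hcard,
    Measure.smul_apply, smul_eq_mul, hbox, ← ENNReal.ofReal_mul (by positivity), div_eq_inv_mul]

end Gram

section SlabCone

variable {κ : Type*} {E : Type*} [NormedAddCommGroup E] [InnerProductSpace ℝ E]

/-- The vectors making a small angle with the hyperplane orthogonal to each `v i`: for unit vectors
`v i`, the sine of that angle is at most `δ i`. This is the region over which the Gaussian is
integrated. -/
def slabCone (v : κ → E) (δ : κ → ℝ) : Set E := {x | ∀ i, |⟪v i, x⟫| ≤ δ i * ‖x‖}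

lemma isCone_slabCone (v : κ → E) (δ : κ → ℝ) : IsCone (slabCone v δ) := by
  intro r hr
  ext x
  rw [mem_smul_set_iff_inv_smul_mem₀ hr.ne']
  simp [slabCone, inner_smul_right, norm_smul, abs_mul, mul_left_comm (δ _), hr.ne']

variable [MeasurableSpace E] [BorelSpace E]

lemma measurableSet_slabCone [Countable κ] (v : κ → E) (δ : κ → ℝ) :
    MeasurableSet (slabCone v δ) := by
  simp only [slabCone, ofPred_forall]
  refine .iInter fun i ↦ (isClosed_le ?_ ?_).measurableSet <;> fun_prop

variable [Fintype κ] [DecidableEq κ] [FiniteDimensional ℝ E]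

theorem volume_slabCone_inter_ball_le {v : κ → E} (hv : LinearIndependent ℝ v) {δ : κ → ℝ}
    (hδ : ∀ i, 0 ≤ δ i) :
    volume (slabCone v δ ∩ ball 0 1) ≤
      ENNReal.ofReal (2 ^ finrank ℝ E * (∏ i, δ i) / √(Matrix.gram ℝ v).det) := by
  let V := Submodule.span ℝ (range v)
  let u := stdOrthonormalBasis ℝ Vᗮ
  let w : κ ⊕ Fin (finrank ℝ Vᗮ) → E := Sum.elim v fun j ↦ u j
  have hu : Orthonormal ℝ fun j ↦ (u j : E) := u.orthonormal.comp_linearIsometry Vᗮ.subtypeₗᵢ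
  have hvu (i j) : ⟪v i, (u j : E)⟫ = 0 :=
    (u j).2 (v i) (Submodule.subset_span (mem_range_self i))
  have hgram : (Matrix.gram ℝ w).det = (Matrix.gram ℝ v).det := det_gram_sumElim_orthonormal hu hvu
  have hw : LinearIndependent ℝ w :=
    Matrix.linearIndependent_of_det_gram_ne_zero <|
      hgram ▸ Matrix.det_gram_ne_zero_iff_linearIndependent.2 hv
  have hcard : Fintype.card (κ ⊕ Fin (finrank ℝ Vᗮ)) = finrank ℝ E := by
    rw [Fintype.card_sum, Fintype.card_fin, ← finrank_span_eq_card hv,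
      Submodule.finrank_add_finrank_orthogonal]
  have hsub : slabCone v δ ∩ ball 0 1 ⊆ {x | ∀ i, |⟪w i, x⟫| ≤ Sum.elim δ 1 i} := by
    rintro x ⟨hxA, hx⟩
    rw [mem_ball_zero_iff] at hx
    rintro (i | j)
    · exact (hxA i).trans (mul_le_of_le_one_right (hδ i) hx.le)
    · exact (abs_real_inner_le_norm _ _).trans (by simpa [w, hu.1 j] using hx.le)
  refine (measure_mono hsub).trans_eq ?_
  rw [volume_forall_abs_inner_le hw hcard (by simpa using hδ), hgram]
  simp

theorem setIntegral_slabCone_fun_norm_stdGaussian_le {v : κ → E} (hv : LinearIndependent ℝ v)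
    {δ : κ → ℝ} (hδ : ∀ i, 0 ≤ δ i) {f : ℝ → ℝ} (hf : Measurable f) (hf₀ : ∀ r, 0 ≤ r → 0 ≤ f r) :
    ∫ x in slabCone v δ, f ‖x‖ ∂stdGaussian E ≤
      2 ^ finrank ℝ E / volume.real (ball (0 : E) 1) * (∫ x, f ‖x‖ ∂stdGaussian E) *
        (∏ i, δ i) / √(Matrix.gram ℝ v).det := by
  have hδ_prod : 0 ≤ ∏ i, δ i := Finset.prod_nonneg fun i _ ↦ hδ i
  have hvol : volume.real (slabCone v δ ∩ ball 0 1) ≤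
      2 ^ finrank ℝ E * (∏ i, δ i) / √(Matrix.gram ℝ v).det :=
    ENNReal.toReal_le_of_le_ofReal (by positivity) (volume_slabCone_inter_ball_le hv hδ)
  have hint : 0 ≤ ∫ x, f ‖x‖ ∂stdGaussian E := integral_nonneg fun x ↦ hf₀ _ (norm_nonneg x)
  calc ∫ x in slabCone v δ, f ‖x‖ ∂stdGaussian E
      = volume.real (slabCone v δ ∩ ball 0 1) / volume.real (ball (0 : E) 1) *
          ∫ x, f ‖x‖ ∂stdGaussian E :=
        (isCone_slabCone v δ).setIntegral_fun_norm_stdGaussian (measurableSet_slabCone v δ)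
          hf.stronglyMeasurable
    _ ≤ 2 ^ finrank ℝ E * (∏ i, δ i) / √(Matrix.gram ℝ v).det / volume.real (ball (0 : E) 1) *
          ∫ x, f ‖x‖ ∂stdGaussian E := by gcongr
    _ = _ := by ring

end SlabCone

lemma sqrt_det_gram_toLp_pair {ι : Type*} [Fintype ι] {α β : ι → ℝ}
    (hα : ∑ j, α j ^ 2 = 1) (hβ : ∑ j, β j ^ 2 = 1) :
    √(Matrix.gram ℝ ![WithLp.toLp 2 α, WithLp.toLp 2 β]).det =
      Real.sin (arccos (∑ j, α j * β j)) := by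
  have hα' : ‖WithLp.toLp 2 α‖ = 1 := by simp [EuclideanSpace.norm_eq, hα]
  have hβ' : ‖WithLp.toLp 2 β‖ = 1 := by simp [EuclideanSpace.norm_eq, hβ]
  rw [sqrt_det_gram_pair, InnerProductGeometry.angle, hα', hβ']
  simp [PiLp.inner_apply, mul_comm]

lemma integral_stdG_ite_eq_setIntegral_slabCone {d : ℕ} (α β : Fin d → ℝ) (δ₁ δ₂ : ℝ) :
    ∫ x, (if |∑ j, α j * x j| ≤ δ₁ * √(∑ j, x j ^ 2) ∧
              |∑ j, β j * x j| ≤ δ₂ * √(∑ j, x j ^ 2)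
            then ∑ j, x j ^ 2 else 0) ∂stdG d =
      ∫ x in slabCone ![WithLp.toLp 2 α, WithLp.toLp 2 β] ![δ₁, δ₂], ‖x‖ ^ 2
        ∂stdGaussian (EuclideanSpace ℝ (Fin d)) := by
  rw [← integral_indicator (measurableSet_slabCone _ _), ← map_pi_eq_stdGaussian,
    ← MeasurableEquiv.coe_toLp, integral_map_equiv, stdG]
  simp [indicator_apply, slabCone, Fin.forall_fin_two, EuclideanSpace.norm_eq, PiLp.inner_apply,
    sq_sqrt, Finset.sum_nonneg, sq_nonneg, mul_comm]

theorem stmt11_general {d : ℕ} {α β : Fin d → ℝ} (hα : ∑ j, α j ^ 2 = 1) (hβ : ∑ j, β j ^ 2 = 1)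
    (hφ_pos : 0 < arccos (∑ j, α j * β j)) (hφ_lt : arccos (∑ j, α j * β j) < π)
    {δ₁ δ₂ : ℝ} (hδ₁ : 0 ≤ δ₁) (hδ₂ : 0 ≤ δ₂) :
    ∫ x, (if |∑ j, α j * x j| ≤ δ₁ * √(∑ j, x j ^ 2) ∧
              |∑ j, β j * x j| ≤ δ₂ * √(∑ j, x j ^ 2)
            then ∑ j, x j ^ 2 else 0) ∂stdG d ≤
      2 ^ d / volume.real (ball (0 : EuclideanSpace ℝ (Fin d)) 1) * d * δ₁ * δ₂ /
        Real.sin (arccos (∑ j, α j * β j)) := by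
  have hsin := sin_pos_of_pos_of_lt_pi hφ_pos hφ_lt
  rw [← sqrt_det_gram_toLp_pair hα hβ] at hsin ⊢
  have hv := Matrix.linearIndependent_of_det_gram_ne_zero (sqrt_pos.1 hsin).ne'
  have hδ : ∀ i, 0 ≤ ![δ₁, δ₂] i := Fin.forall_fin_two.2 ⟨hδ₁, hδ₂⟩
  rw [integral_stdG_ite_eq_setIntegral_slabCone]
  simpa [integral_norm_sq_stdGaussian, mul_assoc] using
    setIntegral_slabCone_fun_norm_stdGaussian_le hv hδ (f := fun r ↦ r ^ 2) (by fun_prop)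
      fun r _ ↦ sq_nonneg r

theorem stmt11 : ∃ C : ℝ, 0 < C ∧ ∀ (α β : Fin 4 → ℝ),
    (∑ j, α j ^ 2) = 1 → (∑ j, β j ^ 2) = 1 →
    ∀ δ₁ δ₂ : ℝ, 0 < δ₁ → 0 < δ₂ →
    δ₁ ≤ Real.arccos (∑ j, α j * β j) → δ₂ ≤ Real.arccos (∑ j, α j * β j) →
    Real.arccos (∑ j, α j * β j) < π →
    (∫ x, (if |∑ j, α j * x j| ≤ δ₁ * Real.sqrt (∑ j, x j ^ 2) ∧
              |∑ j, β j * x j| ≤ δ₂ * Real.sqrt (∑ j, x j ^ 2)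
            then (∑ j, x j ^ 2) else 0) ∂(stdG 4))
      ≤ C * δ₁ * δ₂ / Real.sin (Real.arccos (∑ j, α j * β j)) := by
  have hball : 0 < volume.real (ball (0 : EuclideanSpace ℝ (Fin 4)) 1) :=
    ENNReal.toReal_pos (measure_ball_pos _ _ one_pos).ne' measure_ball_lt_top.ne
  exact ⟨2 ^ 4 / volume.real (ball (0 : EuclideanSpace ℝ (Fin 4)) 1) * (4 : ℕ), by positivity,
    fun α β hα hβ δ₁ δ₂ h₁ h₂ hδ₁ _ hφ ↦
      stmt11_general hα hβ (h₁.trans_le hδ₁) hφ h₁.le h₂.le⟩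
end
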